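/- Let V be a real vector space, K ⊆ V a convex set, m, n ∈ ℕ with n > m, and ℓ ∈ ℕ with ℓ ≤ n − m. Let u = {1, …, ℓ}, and for each k ∈ u let f_k : K → ℝ ∪ {+∞} be a generalized affine map and α_k ∈ ℝ; let s ⊆ u and K_u^s = {x ∈ K : f_k(x) ≤ α_k for all k ∈ u \ s, and f_k(x) = α_k for all k ∈ s}. If K has no face of dimension belonging to {m, m+1, …, n}, then K_u^s has no face of dimension belonging to {m, m+1, …, n − ℓ}. -/

import Mathlib

variable {V : Type*} [AddCommGroup V] [Module ℝ V]

/-- `E` is an extreme subset of `K`: whenever a point of `E` is written as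
`(1-l)•y + l•z` with `y, z ∈ K` and `l ∈ (0,1)`, both `y` and `z` lie in `E`. -/
def IsExtremeSubset (K E : Set V) : Prop :=
  E ⊆ K ∧ ∀ x ∈ E, ∀ y ∈ K, ∀ z ∈ K, ∀ l : ℝ, l ∈ Set.Ioo (0:ℝ) 1 →
    x = (1 - l) • y + l • z → y ∈ E ∧ z ∈ E

/-- `F` is a face of `K`: a convex extreme subset of `K`. -/
def IsFaceOf (K F : Set V) : Prop := Convex ℝ F ∧ IsExtremeSubset K F

/-- The face of `K` generated by `x`: the smallest face of `K` containing `x`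
(the intersection of all faces of `K` containing `x`). -/
def genFace (K : Set V) (x : V) : Set V := ⋂₀ {F | IsFaceOf K F ∧ x ∈ F}

/-- The relative algebraic interior of `C`: all `x ∈ C` such that for every
`y` in the affine hull of `C` there is `ε > 0` with `x ± ε(y - x) ∈ C`. -/
def riSet (C : Set V) : Set V :=
  {x | x ∈ C ∧ ∀ y ∈ affineSpan ℝ C, ∃ ε : ℝ, 0 < ε ∧
    x + ε • (y - x) ∈ C ∧ x - ε • (y - x) ∈ C}

/-- A generalized affine map on `K` with values in `ℝ ∪ {+∞}` (modelled by
`EReal` values that are never `⊥` on `K`), affine with the extended arithmetic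
`0·(+∞) = 0`, `λ·(+∞) = +∞` for `λ > 0`, `α + (+∞) = +∞`. -/
def IsGenAffine (K : Set V) (f : V → EReal) : Prop :=
  (∀ x ∈ K, f x ≠ ⊥) ∧
  ∀ x ∈ K, ∀ y ∈ K, ∀ l : ℝ, l ∈ Set.Icc (0:ℝ) 1 →
    f ((1 - l) • x + l • y) = ((1 - l : ℝ) : EReal) * f x + ((l : ℝ) : EReal) * f y

/-!
The dimension of the face of a convex set `K` generated by `x` is that of the space of directions in
which one can move both ways from `x` inside `K`. Let `F` be a finite-dimensional face of a set
`{x ∈ K | (f₁ x, …, f_ℓ x) ∈ P}` and `x` a relatively interior point of `F`; its values `f_k x` are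
finite, hence so are those of `f_k` on the face of `K` generated by `x`. Lift that face to the graph
of `(f₁, …, f_ℓ)`: a direction of the lifted face along which no `f_k` changes is a direction of
`F`, since moving along it never leaves the constrained set. The remaining directions are detected
by their `ℓ` slopes, so the face of `K` generated by `x` exceeds `F` by at most `ℓ` dimensions.
-/

open Filter Topology

section Direction

variable {C D : Set V} {x y z v : V}

/-- The direction of the face of a convex set `C` generated by `x ∈ C`: the vectors along which one
can move a little both ways from `x` inside `C`, as the filter `𝓝 0` sees both signs of `t`. -/
def faceDirection (hC : Convex ℝ C) (hx : x ∈ C) : Submodule ℝ V where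
  carrier := {v | ∀ᶠ t in 𝓝 (0 : ℝ), x + t • v ∈ C}
  zero_mem' := by simpa using hx
  add_mem' {v w} hv hw := by
    have hdouble : Tendsto (fun t : ℝ => 2 * t) (𝓝 0) (𝓝 0) :=
      Continuous.tendsto' (by fun_prop) _ _ (by simp)
    filter_upwards [hdouble.eventually hv, hdouble.eventually hw] with t htv htw
    convert hC htv htw (a := 1 / 2) (b := 1 / 2) (by norm_num) (by norm_num) (by norm_num) using 1
    module
  smul_mem' c v hv := by
    have hscale : Tendsto (fun t : ℝ => t * c) (𝓝 0) (𝓝 0) :=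
      Continuous.tendsto' (by fun_prop) _ _ (by simp)
    filter_upwards [hscale.eventually hv] with t ht
    rwa [smul_smul]

theorem sub_mem_faceDirection_of_mem_openSegment (hC : Convex ℝ C) (hx : x ∈ C) (hy : y ∈ C)
    (hz : z ∈ C) (hxyz : x ∈ openSegment ℝ y z) : y - z ∈ faceDirection hC hx := by
  obtain ⟨a, b, ha, hb, hab, rfl⟩ := hxyz
  have hadd : ∀ᶠ t in 𝓝 (0 : ℝ), 0 < a + t :=
    ContinuousAt.eventually_lt (by fun_prop) (by fun_prop) (by simpa using ha)
  have hsub : ∀ᶠ t in 𝓝 (0 : ℝ), 0 < b - t :=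
    ContinuousAt.eventually_lt (by fun_prop) (by fun_prop) (by simpa using hb)
  filter_upwards [hadd, hsub] with t hta htb
  convert hC hy hz hta.le htb.le (by linarith) using 1
  module

theorem left_sub_mem_faceDirection (hC : Convex ℝ C) (hx : x ∈ C) (hy : y ∈ C)
    (hz : z ∈ C) (hxyz : x ∈ openSegment ℝ y z) : y - x ∈ faceDirection hC hx := by
  have hyz := sub_mem_faceDirection_of_mem_openSegment hC hx hy hz hxyz
  obtain ⟨a, b, -, -, hab, rfl⟩ := hxyz
  convert Submodule.smul_mem _ b hyz using 1
  obtain rfl := eq_sub_of_add_eq hab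
  module

theorem faceDirection_le_of_mem_openSegment (hC : Convex ℝ C) (hx : x ∈ C) (hy : y ∈ C)
    (hz : z ∈ C) (hxyz : x ∈ openSegment ℝ y z) :
    faceDirection hC hy ≤ faceDirection hC hx := by
  obtain ⟨a, b, ha, hb, hab, rfl⟩ := hxyz
  intro v hv
  have hscale : Tendsto (fun t : ℝ => t / a) (𝓝 0) (𝓝 0) :=
    Continuous.tendsto' (by fun_prop) _ _ (by simp)
  filter_upwards [hscale.eventually hv] with t ht
  convert hC ht hz ha.le hb.le hab using 1
  match_scalars <;> field_simp

theorem mem_faceDirection_iff {hC : Convex ℝ C} {hx : x ∈ C} :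
    v ∈ faceDirection hC hx ↔ ∃ ε : ℝ, 0 < ε ∧ x + ε • v ∈ C ∧ x - ε • v ∈ C := by
  refine ⟨fun hv => ?_, fun ⟨ε, hε, hadd, hsub⟩ => ?_⟩
  · have hneg : ∀ᶠ t in 𝓝 (0 : ℝ), x + t • -v ∈ C := neg_mem hv
    have hboth : ∀ᶠ ε in 𝓝[>] (0 : ℝ), x + ε • v ∈ C ∧ x + ε • -v ∈ C :=
      (Eventually.and hv hneg).filter_mono nhdsWithin_le_nhds
    obtain ⟨ε, ⟨hadd, hsub⟩, hε⟩ := (hboth.and self_mem_nhdsWithin).exists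
    exact ⟨ε, hε, hadd, by rwa [smul_neg, ← sub_eq_add_neg] at hsub⟩
  · have hεv := left_sub_mem_faceDirection hC hx hadd hsub (mem_openSegment_add_sub x _)
    rwa [add_sub_cancel_left, Submodule.smul_mem_iff _ hε.ne'] at hεv

theorem exists_mem_openSegment_of_sub_mem_faceDirection {hC : Convex ℝ C} {hx : x ∈ C}
    (hyx : y - x ∈ faceDirection hC hx) : ∃ z ∈ C, x ∈ openSegment ℝ y z := by
  obtain ⟨ε, hε, -, hsub⟩ := mem_faceDirection_iff.1 hyx
  refine ⟨_, hsub, ε / (1 + ε), 1 / (1 + ε), by positivity, by positivity, ?_, ?_⟩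
  · field_simp
    ring
  · match_scalars <;> field_simp <;> ring

theorem faceDirection_mono (hC : Convex ℝ C) (hD : Convex ℝ D) (hCD : C ⊆ D) (hx : x ∈ C) :
    faceDirection hC hx ≤ faceDirection hD (hCD hx) :=
  fun _ hv => hv.mono fun _ ht => hCD ht

theorem faceDirection_le_vectorSpan (hC : Convex ℝ C) (hx : x ∈ C) :
    faceDirection hC hx ≤ vectorSpan ℝ C := by
  intro v hv
  obtain ⟨ε, hε, hadd, -⟩ := mem_faceDirection_iff.1 hv
  have hεv := vsub_mem_vectorSpan ℝ hadd hx
  rwa [vsub_eq_sub, add_sub_cancel_left, Submodule.smul_mem_iff _ hε.ne'] at hεv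

end Direction

section Face

variable {K F : Set V} {x : V}

theorem isExtremeSubset_iff_isExtreme : IsExtremeSubset K F ↔ IsExtreme ℝ K F := by
  refine ⟨fun ⟨hFK, h⟩ => ⟨hFK, ?_⟩, fun h => ⟨h.subset, ?_⟩⟩
  · rintro y hy z hz x hx ⟨a, b, ha, hb, hab, hxyz⟩
    refine (h x hx y hy z hz b ⟨hb, by linarith⟩ ?_).1
    rw [← hxyz, eq_sub_of_add_eq hab]
  · rintro x hx y hy z hz l ⟨hl₀, hl₁⟩ rfl
    have hxyz : (1 - l) • y + l • z ∈ openSegment ℝ y z :=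
      ⟨1 - l, l, sub_pos.2 hl₁, hl₀, by ring, rfl⟩
    exact ⟨h.left_mem_of_mem_openSegment hy hz hx hxyz,
      h.right_mem_of_mem_openSegment hy hz hx hxyz⟩

theorem isFaceOf_empty (K : Set V) : IsFaceOf K ∅ :=
  ⟨convex_empty, Set.empty_subset K, by simp⟩

theorem isFaceOf_sub_mem_faceDirection (hK : Convex ℝ K) (hx : x ∈ K) :
    IsFaceOf K {y ∈ K | y - x ∈ faceDirection hK hx} := by
  refine ⟨?_, isExtremeSubset_iff_isExtreme.2 ⟨fun y hy => hy.1, ?_⟩⟩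
  · intro y hy z hz a b ha hb hab
    refine ⟨hK hy.1 hz.1 ha hb hab, ?_⟩
    convert add_mem (Submodule.smul_mem _ a hy.2) (Submodule.smul_mem _ b hz.2) using 1
    obtain rfl := eq_sub_of_add_eq hab
    module
  · rintro y hy z hz w ⟨hw, hwx⟩ hwyz
    obtain ⟨w', hw', hxww'⟩ := exists_mem_openSegment_of_sub_mem_faceDirection hwx
    have hyw : y - w ∈ faceDirection hK hx :=
      faceDirection_le_of_mem_openSegment hK hx hw hw' hxww'
        (left_sub_mem_faceDirection hK hw hy hz hwyz)
    exact ⟨hy, by simpa using add_mem hyw hwx⟩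

theorem genFace_eq (hK : Convex ℝ K) (hx : x ∈ K) :
    genFace K x = {y ∈ K | y - x ∈ faceDirection hK hx} := by
  refine Set.Subset.antisymm (Set.sInter_subset_of_mem ?_) (Set.subset_sInter ?_)
  · exact ⟨isFaceOf_sub_mem_faceDirection hK hx, hx, by simp⟩
  · rintro F ⟨hF, hxF⟩ y ⟨hy, hyx⟩
    obtain ⟨z, hz, hxyz⟩ := exists_mem_openSegment_of_sub_mem_faceDirection hyx
    exact (isExtremeSubset_iff_isExtreme.1 hF.2).left_mem_of_mem_openSegment hy hz hxF hxyz

theorem isFaceOf_genFace (hK : Convex ℝ K) (hx : x ∈ K) : IsFaceOf K (genFace K x) :=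
  genFace_eq hK hx ▸ isFaceOf_sub_mem_faceDirection hK hx

theorem vectorSpan_genFace (hK : Convex ℝ K) (hx : x ∈ K) :
    vectorSpan ℝ (genFace K x) = faceDirection hK hx := by
  have hxF : x ∈ genFace K x := by simpa [genFace_eq hK hx] using hx
  rw [vectorSpan_eq_span_vsub_set_right ℝ hxF, genFace_eq hK hx]
  refine le_antisymm (Submodule.span_le.2 ?_) fun v hv => ?_
  · rintro _ ⟨y, ⟨-, hyx⟩, rfl⟩
    exact hyx
  · obtain ⟨ε, hε, hadd, -⟩ := mem_faceDirection_iff.1 hv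
    refine (Submodule.smul_mem_iff _ hε.ne').1 (Submodule.subset_span ⟨x + ε • v, ⟨hadd, ?_⟩, ?_⟩)
    · simpa using Submodule.smul_mem _ ε hv
    · simp

end Face

section RelativeInterior

variable {C : Set V} {x : V}

theorem mem_riSet_iff (hC : Convex ℝ C) (hx : x ∈ C) :
    x ∈ riSet C ↔ faceDirection hC hx = vectorSpan ℝ C := by
  have hxC : x ∈ affineSpan ℝ C := subset_affineSpan ℝ C hx
  rw [← (faceDirection_le_vectorSpan hC hx).ge_iff_eq, ← direction_affineSpan]
  refine ⟨fun hri v hv => ?_, fun hle => ⟨hx, fun y hy => ?_⟩⟩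
  · simpa using mem_faceDirection_iff.2 (hri.2 _ (AffineSubspace.vadd_mem_of_mem_direction hv hxC))
  · exact mem_faceDirection_iff.1 (hle (AffineSubspace.vsub_mem_direction hy hxC))

-- A point whose generated face has maximal dimension works: moving towards any other point of `C`
-- can only enlarge the generated face, so it already contains that point.
theorem riSet_nonempty (hC : Convex ℝ C) (hne : C.Nonempty)
    [FiniteDimensional ℝ (vectorSpan ℝ C)] : (riSet C).Nonempty := by
  have hfin (x : C) : FiniteDimensional ℝ (faceDirection hC x.2) :=
    Submodule.finiteDimensional_of_le (faceDirection_le_vectorSpan hC x.2)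
  obtain ⟨x, hmax⟩ : ∃ x : C, ∀ y : C, Module.finrank ℝ (faceDirection hC y.2) ≤
      Module.finrank ℝ (faceDirection hC x.2) := by
    have hbdd : BddAbove (Set.range fun x : C => Module.finrank ℝ (faceDirection hC x.2)) :=
      ⟨Module.finrank ℝ (vectorSpan ℝ C), by
        rintro _ ⟨x, rfl⟩
        exact Submodule.finrank_mono (faceDirection_le_vectorSpan hC x.2)⟩
    have : Nonempty C := hne.to_subtype
    obtain ⟨x, hx⟩ := Nat.sSup_mem (Set.range_nonempty _) hbdd
    exact ⟨x, fun y => (le_csSup hbdd ⟨y, rfl⟩).trans hx.ge⟩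
  refine ⟨x, (mem_riSet_iff hC x.2).2 ((faceDirection_le_vectorSpan hC x.2).antisymm ?_)⟩
  rw [vectorSpan_eq_span_vsub_set_right ℝ x.2, Submodule.span_le]
  rintro _ ⟨y, hy, rfl⟩
  obtain ⟨z, hzxy⟩ : (openSegment ℝ y (x : V)).Nonempty := ⟨_, midpoint_mem_openSegment y (x : V)⟩
  have hz : z ∈ C := hC.openSegment_subset hy x.2 hzxy
  have hle : faceDirection hC x.2 ≤ faceDirection hC hz :=
    faceDirection_le_of_mem_openSegment hC hz x.2 hy (openSegment_symm ℝ y x ▸ hzxy)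
  have := hfin ⟨z, hz⟩
  rw [Submodule.eq_of_le_of_finrank_le hle (hmax ⟨z, hz⟩)]
  exact sub_mem_faceDirection_of_mem_openSegment hC hz hy x.2 hzxy

end RelativeInterior

section Rank

universe u v

variable {𝕜 : Type*} {E : Type u} {U : Type v} [DivisionRing 𝕜] [AddCommGroup E] [Module 𝕜 E]
  [AddCommGroup U] [Module 𝕜 U] [FiniteDimensional 𝕜 U]

theorem rank_le_rank_ker_add_finrank (φ : E →ₗ[𝕜] U) :
    Module.rank 𝕜 E ≤ Module.rank 𝕜 (LinearMap.ker φ) + (Module.finrank 𝕜 U : Cardinal) := by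
  have hrange : Module.rank 𝕜 (LinearMap.range φ) ≤ Module.finrank 𝕜 U :=
    Module.finrank_eq_rank 𝕜 U ▸ Submodule.rank_le _
  rw [← Cardinal.lift_le.{v}, ← φ.lift_rank_range_add_rank_ker, add_comm, Cardinal.lift_add,
    Cardinal.lift_natCast, ← Cardinal.lift_natCast.{u, v}]
  exact add_le_add_right (Cardinal.lift_le.2 hrange) _

theorem rank_map_fst_le (W : Submodule 𝕜 (E × U)) :
    Module.rank 𝕜 (W.map (LinearMap.fst 𝕜 E U)) ≤
      Module.rank 𝕜 (W.comap (LinearMap.inl 𝕜 E U)) + (Module.finrank 𝕜 U : Cardinal) := by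
  obtain ⟨σ, hσ⟩ := ((LinearMap.fst 𝕜 E U).submoduleMap W).exists_rightInverse_of_surjective
    (LinearMap.range_eq_top.2 (LinearMap.submoduleMap_surjective _ W))
  have hfst (e : W.map (LinearMap.fst 𝕜 E U)) : (σ e : E × U).1 = e :=
    congrArg Subtype.val (LinearMap.congr_fun hσ e)
  let φ : W.map (LinearMap.fst 𝕜 E U) →ₗ[𝕜] U := LinearMap.snd 𝕜 E U ∘ₗ W.subtype ∘ₗ σ
  have hker : (LinearMap.ker φ).map (Submodule.subtype _) ≤ W.comap (LinearMap.inl 𝕜 E U) := by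
    rintro _ ⟨e, he : (σ e : E × U).2 = 0, rfl⟩
    have hσe : (σ e : E × U) = ((e : E), 0) := Prod.ext (hfst e) he
    exact (hσe ▸ (σ e).2 : ((e : E), (0 : U)) ∈ W)
  calc Module.rank 𝕜 (W.map (LinearMap.fst 𝕜 E U))
      ≤ Module.rank 𝕜 (LinearMap.ker φ) + Module.finrank 𝕜 U := rank_le_rank_ker_add_finrank φ
    _ = Module.rank 𝕜 ((LinearMap.ker φ).map (Submodule.subtype _)) + Module.finrank 𝕜 U := by
      rw [(Submodule.equivMapOfInjective _ (Submodule.injective_subtype _) _).rank_eq]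
    _ ≤ Module.rank 𝕜 (W.comap (LinearMap.inl 𝕜 E U)) + Module.finrank 𝕜 U := by
      gcongr
      exact Submodule.rank_mono hker

end Rank

section GenAffine

variable {ι : Type*} {K : Set V} {f : ι → V → EReal} {x y z : V}

theorem IsGenAffine.ne_top_of_mem_openSegment {f : V → EReal} (hf : IsGenAffine K f) (hy : y ∈ K)
    (hz : z ∈ K) (hx : x ∈ openSegment ℝ y z) (hfx : f x ≠ ⊤) : f y ≠ ⊤ := by
  obtain ⟨a, b, ha, hb, hab, rfl⟩ := hx
  obtain rfl := eq_sub_of_add_eq hab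
  rw [hf.2 y hy z hz b ⟨hb.le, by linarith⟩] at hfx
  intro hfy
  have hbot : (b : EReal) * f z ≠ ⊥ := by
    simp [EReal.mul_ne_bot, hf.1 z hz, hb.le]
  rw [hfy, EReal.coe_mul_top_of_pos ha, EReal.top_add_of_ne_bot hbot] at hfx
  exact hfx rfl

/-- The graph over `K` of a family of extended real-valued maps, restricted to the points where
all of them are finite. -/
def finiteGraph {X : Type*} (K : Set X) (f : ι → X → EReal) : Set (X × (ι → ℝ)) :=
  {p | p.1 ∈ K ∧ ∀ k, f k p.1 = (p.2 k : EReal)}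

theorem convex_finiteGraph (hK : Convex ℝ K) (hf : ∀ k, IsGenAffine K (f k)) :
    Convex ℝ (finiteGraph K f) := by
  rintro ⟨y, r⟩ ⟨hy, hr⟩ ⟨z, t⟩ ⟨hz, ht⟩ a b ha hb hab
  obtain rfl := eq_sub_of_add_eq hab
  refine ⟨hK hy hz ha hb hab, fun k => ?_⟩
  calc f k ((1 - b) • y + b • z)
      = ((1 - b : ℝ) : EReal) * f k y + (b : EReal) * f k z :=
        (hf k).2 y hy z hz b ⟨hb, sub_nonneg.1 ha⟩
    _ = ((1 - b : ℝ) : EReal) * r k + (b : EReal) * t k := by rw [← hr k, ← ht k]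
    _ = (((1 - b) • r + b • t) k : ℝ) := by simp

theorem eq_of_mem_finiteGraph {X : Type*} {K : Set X} {f : ι → X → EReal} {x : X}
    {r t : ι → ℝ} (hr : (x, r) ∈ finiteGraph K f) (ht : (x, t) ∈ finiteGraph K f) : r = t :=
  funext fun k => EReal.coe_injective ((hr.2 k).symm.trans (ht.2 k))

theorem exists_mem_finiteGraph (hf : ∀ k, IsGenAffine K (f k)) (hx : x ∈ K)
    (hfx : ∀ k, f k x ≠ ⊤) : ∃ r : ι → ℝ, (x, r) ∈ finiteGraph K f :=
  ⟨fun k => (f k x).toReal, hx, fun k => (EReal.coe_toReal (hfx k) ((hf k).1 x hx)).symm⟩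

theorem exists_mem_openSegment_finiteGraph (hK : Convex ℝ K) (hf : ∀ k, IsGenAffine K (f k))
    {r : ι → ℝ} (hxr : (x, r) ∈ finiteGraph K f) (hy : y ∈ K) (hz : z ∈ K)
    (hx : x ∈ openSegment ℝ y z) :
    ∃ p ∈ finiteGraph K f, ∃ q ∈ finiteGraph K f,
      p.1 = y ∧ q.1 = z ∧ (x, r) ∈ openSegment ℝ p q := by
  have hfx (k : ι) : f k x ≠ ⊤ := hxr.2 k ▸ EReal.coe_ne_top _
  obtain ⟨t, ht⟩ := exists_mem_finiteGraph hf hy fun k =>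
    (hf k).ne_top_of_mem_openSegment hy hz hx (hfx k)
  obtain ⟨u, hu⟩ := exists_mem_finiteGraph hf hz fun k =>
    (hf k).ne_top_of_mem_openSegment hz hy (openSegment_symm ℝ y z ▸ hx) (hfx k)
  obtain ⟨a, b, ha, hb, hab, rfl⟩ := hx
  have hcomb : (a • y + b • z, a • t + b • u) ∈ finiteGraph K f :=
    convex_finiteGraph hK hf ht hu ha.le hb.le hab
  refine ⟨_, ht, _, hu, rfl, rfl, a, b, ha, hb, hab, ?_⟩
  rw [eq_of_mem_finiteGraph hxr hcomb]
  rfl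

theorem faceDirection_le_map_fst (hK : Convex ℝ K) (hf : ∀ k, IsGenAffine K (f k)) {r : ι → ℝ}
    (hxr : (x, r) ∈ finiteGraph K f) :
    faceDirection hK hxr.1 ≤
      (faceDirection (convex_finiteGraph hK hf) hxr).map (LinearMap.fst ℝ V (ι → ℝ)) := by
  intro v hv
  obtain ⟨ε, hε, hadd, hsub⟩ := mem_faceDirection_iff.1 hv
  obtain ⟨p, hp, q, hq, hpx, -, hpq⟩ :=
    exists_mem_openSegment_finiteGraph hK hf hxr hadd hsub (mem_openSegment_add_sub x _)
  rw [← Submodule.smul_mem_iff _ hε.ne']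
  exact ⟨_, left_sub_mem_faceDirection (convex_finiteGraph hK hf) hxr hp hq hpq, by simp [hpx]⟩

theorem comap_inl_faceDirection_le (hK : Convex ℝ K) (hf : ∀ k, IsGenAffine K (f k)) {r : ι → ℝ}
    (hxr : (x, r) ∈ finiteGraph K f) {L F : Set V} (hL : ∀ y, (y, r) ∈ finiteGraph K f → y ∈ L)
    (hF : IsFaceOf L F) (hx : x ∈ F) :
    (faceDirection (convex_finiteGraph hK hf) hxr).comap (LinearMap.inl ℝ V (ι → ℝ)) ≤
      faceDirection hF.1 hx := by
  intro v hv
  obtain ⟨ε, hε, hadd, hsub⟩ := mem_faceDirection_iff.1 (Submodule.mem_comap.1 hv)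
  have haddL : x + ε • v ∈ L := hL _ (by simpa using hadd)
  have hsubL : x - ε • v ∈ L := hL _ (by simpa using hsub)
  have hseg := mem_openSegment_add_sub (𝕜 := ℝ) x (ε • v)
  have hext := isExtremeSubset_iff_isExtreme.1 hF.2
  exact mem_faceDirection_iff.2 ⟨ε, hε, hext.left_mem_of_mem_openSegment haddL hsubL hx hseg,
    hext.right_mem_of_mem_openSegment haddL hsubL hx hseg⟩

theorem setOf_le_or_eq_eq (hf : ∀ k, IsGenAffine K (f k)) (α : ι → ℝ) (s : Set ι) :
    {y ∈ K | (∀ k ∉ s, f k y ≤ (α k : EReal)) ∧ (∀ k ∈ s, f k y = (α k : EReal))} =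
      {y ∈ K | ∃ t ∈ {t : ι → ℝ | (∀ k ∉ s, t k ≤ α k) ∧ ∀ k ∈ s, t k = α k},
        ∀ k, f k y = (t k : EReal)} := by
  ext y
  refine and_congr_right fun hy => ⟨fun ⟨hle, heq⟩ => ?_, ?_⟩
  · have hne (k : ι) : f k y ≠ ⊤ := by
      by_cases hk : k ∈ s
      · exact heq k hk ▸ EReal.coe_ne_top _
      · exact ne_top_of_le_ne_top (EReal.coe_ne_top _) (hle k hk)
    obtain ⟨t, ht⟩ := exists_mem_finiteGraph hf hy hne
    refine ⟨t, ⟨fun k hk => ?_, fun k hk => ?_⟩, ht.2⟩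
    · exact EReal.coe_le_coe_iff.1 (ht.2 k ▸ hle k hk)
    · exact EReal.coe_injective (ht.2 k ▸ heq k hk)
  · rintro ⟨t, ⟨hle, heq⟩, ht⟩
    exact ⟨fun k hk => ht k ▸ EReal.coe_le_coe_iff.2 (hle k hk), fun k hk => ht k ▸ heq k hk ▸ rfl⟩

variable [Fintype ι]

theorem exists_isFaceOf_rank_le (hK : Convex ℝ K) (hf : ∀ k, IsGenAffine K (f k))
    (P : Set (ι → ℝ)) {F : Set V} (hF : IsFaceOf {y ∈ K | ∃ t ∈ P, ∀ k, f k y = (t k : EReal)} F)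
    [FiniteDimensional ℝ (vectorSpan ℝ F)] :
    ∃ G : Set V, IsFaceOf K G ∧
      Module.rank ℝ (vectorSpan ℝ F) ≤ Module.rank ℝ (vectorSpan ℝ G) ∧
      Module.rank ℝ (vectorSpan ℝ G) ≤ Module.rank ℝ (vectorSpan ℝ F) + Fintype.card ι := by
  rcases F.eq_empty_or_nonempty with rfl | hne
  · exact ⟨∅, isFaceOf_empty K, le_rfl, le_self_add⟩
  obtain ⟨x, hri⟩ := riSet_nonempty hF.1 hne
  have hspan := (mem_riSet_iff hF.1 hri.1).1 hri
  have hFK : F ⊆ K := fun y hy => (hF.2.1 hy).1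
  obtain ⟨hxK, r, hr, hfx⟩ := hF.2.1 hri.1
  have hxr : (x, r) ∈ finiteGraph K f := ⟨hxK, hfx⟩
  have hfibre (y : V) (hy : (y, r) ∈ finiteGraph K f) :
      y ∈ {y ∈ K | ∃ t ∈ P, ∀ k, f k y = (t k : EReal)} := ⟨hy.1, r, hr, hy.2⟩
  refine ⟨genFace K x, isFaceOf_genFace hK hxK, ?_, ?_⟩ <;> rw [vectorSpan_genFace hK hxK, ← hspan]
  · exact Submodule.rank_mono (faceDirection_mono hF.1 hK hFK hri.1)
  · calc Module.rank ℝ (faceDirection hK hxK)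
        ≤ Module.rank ℝ ((faceDirection (convex_finiteGraph hK hf) hxr).map
            (LinearMap.fst ℝ V (ι → ℝ))) :=
          Submodule.rank_mono (faceDirection_le_map_fst hK hf hxr)
      _ ≤ Module.rank ℝ ((faceDirection (convex_finiteGraph hK hf) hxr).comap
            (LinearMap.inl ℝ V (ι → ℝ))) + (Module.finrank ℝ (ι → ℝ) : Cardinal) :=
          rank_map_fst_le _
      _ ≤ Module.rank ℝ (faceDirection hF.1 hri.1) + Fintype.card ι := by
          rw [Module.finrank_fintype_fun_eq_card]
          gcongr
          exact Submodule.rank_mono <|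
            comap_inl_faceDirection_le hK hf hxr hfibre hF hri.1

end GenAffine

theorem stmt13_general {ι : Type*} [Fintype ι] (K : Set V) (hK : Convex ℝ K) (m n : ℕ)
    (f : ι → V → EReal) (hf : ∀ k, IsGenAffine K (f k)) (P : Set (ι → ℝ))
    (hKfaces : ∀ F : Set V, IsFaceOf K F → ∀ d : ℕ, m ≤ d → d ≤ n →
      Module.rank ℝ ↥(vectorSpan ℝ F) ≠ (d : Cardinal)) :
    ∀ F : Set V, IsFaceOf {y ∈ K | ∃ t ∈ P, ∀ k, f k y = (t k : EReal)} F →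
      ∀ d : ℕ, m ≤ d → d + Fintype.card ι ≤ n →
        Module.rank ℝ ↥(vectorSpan ℝ F) ≠ (d : Cardinal) := by
  intro F hF d hmd hdn hrank
  have : FiniteDimensional ℝ (vectorSpan ℝ F) :=
    Module.rank_lt_aleph0_iff.1 (hrank ▸ Cardinal.natCast_lt_aleph0)
  obtain ⟨G, hG, hFG, hGF⟩ := exists_isFaceOf_rank_le hK hf P hF
  rw [hrank] at hFG hGF
  obtain ⟨e, he⟩ := Cardinal.lt_aleph0.1 (hGF.trans_lt (mod_cast Cardinal.natCast_lt_aleph0))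
  rw [he] at hFG hGF
  have hde : d ≤ e := mod_cast hFG
  have hed : e ≤ d + Fintype.card ι := mod_cast hGF
  exact hKfaces G hG e (hmd.trans hde) (hed.trans hdn) he

theorem stmt13 (K : Set V) (hK : Convex ℝ K) (m n ℓ : ℕ) (hmn : m < n)
    (hℓ : ℓ + m ≤ n)
    (f : Fin ℓ → V → EReal) (hf : ∀ k, IsGenAffine K (f k))
    (α : Fin ℓ → ℝ) (s : Set (Fin ℓ))
    (hKfaces : ∀ F : Set V, IsFaceOf K F → ∀ d : ℕ, m ≤ d → d ≤ n →
      Module.rank ℝ ↥(vectorSpan ℝ F) ≠ (d : Cardinal)) :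
    ∀ F : Set V,
      IsFaceOf {y ∈ K | (∀ k ∉ s, f k y ≤ (α k : EReal)) ∧
                        (∀ k ∈ s, f k y = (α k : EReal))} F →
      ∀ d : ℕ, m ≤ d → d + ℓ ≤ n →
        Module.rank ℝ ↥(vectorSpan ℝ F) ≠ (d : Cardinal) := by
  rw [setOf_le_or_eq_eq hf α s]
  simpa only [Fintype.card_fin] using stmt13_general K hK m n f hf _ hKfaces
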